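/- A free product of two residually finite-p groups is residually finite-p. -/

import Mathlib

def ResiduallyFiniteP (p : ℕ) (G : Type*) [Group G] : Prop :=
  ∀ g : G, g ≠ 1 → ∃ (Q : Type) (_ : Group Q) (f : G →* Q),
    Finite Q ∧ IsPGroup p Q ∧ f g ≠ 1

/-!
Let `w = x₁ ⋯ xₙ` be a reduced word in a free product. By induction on `n` we find a finite
`p`-quotient in which `w` survives, by remembering more: a subset `E` of the quotient that
the images of the suffixes of `w` enter only once all of `w` has been read, and that is stable
under left multiplication by every factor but that of `x₁`. To prepend a letter `x₀`, whose image
under some `φ` to a finite `p`-group `P` is nontrivial, pass to the wreath product `P ≀ᵣ Q`: the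
factor of `x₀` now also multiplies by `φ` the base coordinates in `E`, all the others act as
before. The base coordinate at the current position stays `1` along the proper suffixes of
`x₀ w`, and becomes `φ x₀` at `x₀ w`, so its being nontrivial defines the next `E`.
-/

open Monoid
open Monoid.CoprodI (Word of)

section WreathProduct

variable {K P Q : Type*} [Group K] [Group P] [Group Q]

theorem left_pow_of_right_eq_one {a : P ≀ᵣ Q} (ha : a.right = 1) (n : ℕ) :
    (a ^ n).left = a.left ^ n := by
  induction n with
  | zero => simp
  | succ n ih =>
    ext q
    simp [pow_succ', ih, ha]

theorem isPGroup_regularWreathProduct {p : ℕ} [Finite P] (hP : IsPGroup p P)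
    (hQ : IsPGroup p Q) : IsPGroup p (P ≀ᵣ Q) := by
  intro a
  obtain ⟨m, hm⟩ := isPGroup_iff_exists_pow_pow_eq_one.mp hP
  obtain ⟨k, hk⟩ := hQ a.right
  have right_eq_one : (a ^ p ^ k).right = 1 := by
    rw [← hk]
    exact map_pow RegularWreathProduct.rightHom a _
  refine ⟨k + m, ?_⟩
  rw [pow_add, pow_mul]
  ext q
  · rw [left_pow_of_right_eq_one right_eq_one]
    exact hm _
  · exact (map_pow RegularWreathProduct.rightHom _ _).trans (by simp [right_eq_one])

/-- The coordinate of the base component of `a : P ≀ᵣ Q` at the position given by the top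
component of `a`. -/
def coordAtRight (a : P ≀ᵣ Q) : P :=
  a.left a.right

theorem coordAtRight_mul (a b : P ≀ᵣ Q) :
    coordAtRight (a * b) = a.left (a.right * b.right) * coordAtRight b := by
  simp [coordAtRight]

/-- The lift of `f : K →* Q` to the wreath product in which `k : K` also multiplies by `φ k` the
base coordinates lying in a `K`-stable set `E`. -/
noncomputable def twistedLift (f : K →* Q) (φ : K →* P) {E : Set Q}
    (hE : ∀ k q, f k * q ∈ E ↔ q ∈ E) : K →* P ≀ᵣ Q where
  toFun k := ⟨E.mulIndicator fun _ => φ k, f k⟩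
  map_one' := by ext <;> simp
  map_mul' k l := by
    ext q
    · have mem_iff : (f k)⁻¹ * q ∈ E ↔ q ∈ E := by rw [← map_inv, hE]
      by_cases hq : q ∈ E <;> simp [hq, mem_iff]
    · simp

end WreathProduct

section FreeProduct

variable {ι : Type*} {G : ι → Type*} [∀ i, Group (G i)]
variable {P Q : Type*} [Group P] [Group Q]

open Classical in
/-- The lift of `f` to the wreath product that is twisted by `φ` over `E` on the `i`-th factor, and
is the standard lift on all the other factors. -/
noncomputable def twistFactor (f : CoprodI G →* Q) {i : ι} (φ : G i →* P) {E : Set Q}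
    (hE : ∀ (g : G i) q, f (of g) * q ∈ E ↔ q ∈ E) : CoprodI G →* P ≀ᵣ Q :=
  CoprodI.lift <| Function.update (fun j => RegularWreathProduct.inl.comp (f.comp (of (i := j)))) i
    (twistedLift (f.comp of) φ hE)

section twistFactor

variable {f : CoprodI G →* Q} {i : ι} {φ : G i →* P} {E : Set Q}
  {hE : ∀ (g : G i) q, f (of g) * q ∈ E ↔ q ∈ E}

theorem twistFactor_of_self (g : G i) :
    twistFactor f φ hE (of g) = ⟨E.mulIndicator fun _ => φ g, f (of g)⟩ := by
  simp [twistFactor, twistedLift]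

theorem twistFactor_of_of_ne {j : ι} (hj : j ≠ i) (g : G j) :
    twistFactor f φ hE (of g) = RegularWreathProduct.inl (f (of g)) := by
  simp [twistFactor, hj]

theorem right_twistFactor (x : CoprodI G) : (twistFactor f φ hE x).right = f x := by
  suffices RegularWreathProduct.rightHom.comp (twistFactor f φ hE) = f from
    DFunLike.congr_fun this x
  ext j g
  by_cases hj : j = i
  · subst hj
    simp [twistFactor_of_self]
  · simp [twistFactor_of_of_ne hj]

theorem coordAtRight_twistFactor_of_mul_of_notMem {j : ι} (g : G j) {x : CoprodI G}
    (hx : f x ∉ E) :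
    coordAtRight (twistFactor f φ hE (of g * x)) = coordAtRight (twistFactor f φ hE x) := by
  rw [map_mul, coordAtRight_mul, right_twistFactor, right_twistFactor]
  by_cases hj : j = i
  · subst hj
    simp [twistFactor_of_self, hE, hx]
  · simp [twistFactor_of_of_ne hj]

theorem coordAtRight_twistFactor_of_mul_of_mem (g : G i) {x : CoprodI G} (hx : f x ∈ E) :
    coordAtRight (twistFactor f φ hE (of g * x)) =
      φ g * coordAtRight (twistFactor f φ hE x) := by
  rw [map_mul, coordAtRight_mul, right_twistFactor, right_twistFactor]
  simp [twistFactor_of_self, hE, hx]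

end twistFactor

/-- The set `E` detects, along the homomorphism `f`, the moment at which the reduced word `w` has
been read completely, from right to left; and it is stable under all the factors that can be
prepended to `w`. -/
structure DetectsCompletion (f : CoprodI G →* Q) (w : Word G) (E : Set Q) : Prop where
  mul_mem_iff : ∀ j, w.fstIdx ≠ some j → ∀ (g : G j) q, f (of g) * q ∈ E ↔ q ∈ E
  map_prod_mem_iff : ∀ u : Word G, u.toList <:+ w.toList → (f u.prod ∈ E ↔ u = w)

namespace DetectsCompletion

theorem empty : DetectsCompletion (1 : CoprodI G →* Q) Word.empty Set.univ where
  mul_mem_iff := by simp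
  map_prod_mem_iff u hu := by
    simpa [Word.ext_iff] using hu

variable {f : CoprodI G →* Q} {w : Word G} {E : Set Q}

theorem map_prod_ne_one (h : DetectsCompletion f w E) (hw : w ≠ Word.empty) : f w.prod ≠ 1 := by
  have one_notMem : (1 : Q) ∉ E := by
    simpa [hw.symm] using h.map_prod_mem_iff Word.empty List.nil_suffix
  exact fun hf => one_notMem (hf ▸ (h.map_prod_mem_iff w List.suffix_rfl).mpr rfl)

theorem coordAtRight_twistFactor_eq_one (h : DetectsCompletion f w E) {i : ι} (φ : G i →* P)
    (hi : w.fstIdx ≠ some i) (u : Word G) (hu : u.toList <:+ w.toList) :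
    coordAtRight (twistFactor f φ (h.mul_mem_iff i hi) u.prod) = 1 := by
  induction u using Word.consRecOn with
  | empty => simp [coordAtRight]
  | cons j g u hju hg ih =>
    have u_suffix : u.toList <:+ w.toList := (List.suffix_cons _ _).trans hu
    have u_ne : u ≠ w := by
      rintro rfl
      simpa using hu.length_le
    have map_notMem : f u.prod ∉ E := (h.map_prod_mem_iff u u_suffix).not.mpr u_ne
    rw [Word.prod_cons, coordAtRight_twistFactor_of_mul_of_notMem g map_notMem, ih u_suffix]

theorem cons (h : DetectsCompletion f w E) {i : ι} {g : G i} (φ : G i →* P) (hφ : φ g ≠ 1)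
    (hi : w.fstIdx ≠ some i) (hg : g ≠ 1) :
    DetectsCompletion (twistFactor f φ (h.mul_mem_iff i hi)) (Word.cons g w hi hg)
      {a | coordAtRight a ≠ 1} where
  mul_mem_iff j hj k a := by
    have hji : j ≠ i := fun hji => hj (by simp [hji])
    simp [twistFactor_of_of_ne hji, coordAtRight_mul]
  map_prod_mem_iff u hu := by
    rcases List.suffix_cons_iff.mp hu with u_eq | u_suffix
    · obtain rfl : u = Word.cons g w hi hg := Word.ext u_eq
      have map_mem : f w.prod ∈ E := (h.map_prod_mem_iff w List.suffix_rfl).mpr rfl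
      rw [Word.prod_cons, Set.mem_ofPred_eq, coordAtRight_twistFactor_of_mul_of_mem g map_mem,
        h.coordAtRight_twistFactor_eq_one φ hi w List.suffix_rfl, mul_one]
      exact iff_of_true hφ rfl
    · have u_ne : u ≠ Word.cons g w hi hg := by
        rintro rfl
        simpa using u_suffix.length_le
      simp [h.coordAtRight_twistFactor_eq_one φ hi u u_suffix, u_ne]

end DetectsCompletion

end FreeProduct

namespace ResiduallyFiniteP

variable {p : ℕ}

theorem of_injective {G H : Type*} [Group G] [Group H] (hH : ResiduallyFiniteP p H) (f : G →* H)
    (hf : Function.Injective f) : ResiduallyFiniteP p G := by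
  intro g hg
  obtain ⟨Q, _, φ, hfin, hQ, hφ⟩ := hH (f g) ((map_ne_one_iff f hf).mpr hg)
  exact ⟨Q, _, φ.comp f, hfin, hQ, hφ⟩

section CoprodI

variable {ι : Type*} {G : ι → Type*} [∀ i, Group (G i)]

theorem exists_detectsCompletion (hG : ∀ i, ResiduallyFiniteP p (G i)) (w : Word G) :
    ∃ (Q : Type) (_ : Group Q) (f : CoprodI G →* Q) (E : Set Q),
      Finite Q ∧ IsPGroup p Q ∧ DetectsCompletion f w E := by
  induction w using Word.consRecOn with
  | empty =>
    exact ⟨Unit, inferInstance, 1, Set.univ, inferInstance, IsPGroup.of_subsingleton _ _, .empty⟩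
  | cons i g w hi hg ih =>
    obtain ⟨Q, _, f, E, _, hQ, h⟩ := ih
    obtain ⟨P, _, φ, _, hP, hφ⟩ := hG i g hg
    exact ⟨P ≀ᵣ Q, inferInstance, _, _, inferInstance, isPGroup_regularWreathProduct hP hQ,
      h.cons φ hφ hi hg⟩

theorem coprodI (hG : ∀ i, ResiduallyFiniteP p (G i)) : ResiduallyFiniteP p (CoprodI G) := by
  classical
  intro x hx
  obtain ⟨w, rfl⟩ := Word.equiv.symm.surjective x
  have hw : w ≠ Word.empty := by
    rintro rfl
    exact hx Word.prod_empty
  obtain ⟨Q, _, f, E, hfin, hQ, h⟩ := exists_detectsCompletion hG w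
  exact ⟨Q, _, f, hfin, hQ, h.map_prod_ne_one hw⟩

end CoprodI

end ResiduallyFiniteP

section BinaryCoproduct

universe u v

/-- The two-element family consisting of `A` and `B`, lifted to a common universe. -/
def boolFamily (A : Type u) (B : Type v) : Bool → Type (max u v)
  | true => ULift A
  | false => ULift B

variable {A : Type u} {B : Type v} [Group A] [Group B]

instance : ∀ b, Group (boolFamily A B b)
  | true => inferInstanceAs (Group (ULift A))
  | false => inferInstanceAs (Group (ULift B))

/-- The canonical map from the binary to the indexed free product. -/
def coprodToCoprodI : Coprod A B →* CoprodI (boolFamily A B) :=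
  Coprod.lift ((of (i := true)).comp MulEquiv.ulift.symm.toMonoidHom)
    ((of (i := false)).comp MulEquiv.ulift.symm.toMonoidHom)

theorem coprodToCoprodI_injective :
    Function.Injective (coprodToCoprodI (A := A) (B := B)) := by
  let inverse : CoprodI (boolFamily A B) →* Coprod A B := CoprodI.lift fun
    | true => Coprod.inl.comp (MulEquiv.ulift (α := A)).toMonoidHom
    | false => Coprod.inr.comp (MulEquiv.ulift (α := B)).toMonoidHom
  have inverse_comp : inverse.comp coprodToCoprodI = .id _ := Coprod.hom_ext rfl rfl
  exact Function.LeftInverse.injective (DFunLike.congr_fun inverse_comp)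

end BinaryCoproduct

-- `IsPGroup p` only asks that orders divide a power of `p`: for `p = 0` this is residual
-- finiteness, and for composite `p` the orders are products of the prime factors of `p`.
theorem stmt_17_general (p : ℕ) (A B : Type*) [Group A] [Group B]
    (hA : ResiduallyFiniteP p A) (hB : ResiduallyFiniteP p B) :
    ResiduallyFiniteP p (Monoid.Coprod A B) := by
  refine ResiduallyFiniteP.of_injective (.coprodI ?_) coprodToCoprodI coprodToCoprodI_injective
  rintro (_ | _)
  · exact hB.of_injective (MulEquiv.ulift (α := B)).toMonoidHom MulEquiv.ulift.injective
  · exact hA.of_injective (MulEquiv.ulift (α := A)).toMonoidHom MulEquiv.ulift.injective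

theorem stmt_17 (p : ℕ) (hp : p.Prime) (A B : Type*) [Group A] [Group B]
    (hA : ResiduallyFiniteP p A) (hB : ResiduallyFiniteP p B) :
    ResiduallyFiniteP p (Monoid.Coprod A B) :=
  stmt_17_general p A B hA hB
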